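/- Suppose iH ∈ su(N) and there exists a symmetric unitary matrix S (S = Sᵀ, S*S = 1) with SH + Hᵀ S = 0. Then there exists a unitary T such that T H T* is skew-symmetric, i.e. (THT*)ᵀ = -(THT*). -/

import Mathlib

open Matrix

open scoped Matrix.Norms.L2Operator in
theorem hua_aux (N : ℕ) (S : Matrix (Fin N) (Fin N) ℂ)
    (hSsym : Sᵀ = S) (hSu : Sᴴ * S = 1) (hSu' : S * Sᴴ = 1) :
    ∃ T : Matrix (Fin N) (Fin N) ℂ, Tᴴ * T = 1 ∧ T * Tᴴ = 1 ∧ Tᵀ * T = S := by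
  have hU : S ∈ unitary (Matrix (Fin N) (Fin N) ℂ) := ⟨hSu, hSu'⟩
  have hn : IsStarNormal S := ⟨by
    show Sᴴ * S = S * Sᴴ
    rw [hSu, hSu']⟩
  have hfin : (spectrum ℂ S).Finite := Module.End.finite_spectrum (Matrix.toLin' S) |>.subset (by
    rw [Matrix.spectrum_toLin'])
  let p : Polynomial ℂ := Lagrange.interpolate hfin.toFinset id (fun z : ℂ => z ^ (1 / 2 : ℂ))
  have hp : ∀ z ∈ spectrum ℂ S, p.eval z * p.eval z = z := by
    intro z hz
    have h1 : p.eval z = z ^ (1 / 2 : ℂ) :=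
      Lagrange.eval_interpolate_at_node (v := id) (fun z : ℂ => z ^ (1 / 2 : ℂ))
        (Function.injective_id.injOn) (hfin.mem_toFinset.2 hz)
    rw [h1, ← sq, one_div]
    exact_mod_cast Complex.cpow_nat_inv_pow z two_ne_zero
  have hT : cfc p.eval S = Polynomial.aeval S p := cfc_polynomial p S
  have hTU : cfc p.eval S ∈ unitary (Matrix (Fin N) (Fin N) ℂ) := by
    rw [cfc_unitary_iff p.eval S]
    intro z hz
    have h1 : ‖z‖ = 1 := by
      simpa using spectrum.subset_circle_of_unitary hU hz
    have h2 : ‖p.eval z‖ * ‖p.eval z‖ = 1 := by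
      rw [← norm_mul, hp z hz, h1]
    have h3 : star (p.eval z) * p.eval z = ((‖p.eval z‖ * ‖p.eval z‖ : ℝ) : ℂ) := by
      rw [← sq, Complex.ofReal_pow]
      exact Complex.conj_mul' _
    rw [h3, h2, Complex.ofReal_one]
  have hsym : (Polynomial.aeval S p)ᵀ = Polynomial.aeval S p := by
    rw [Polynomial.aeval_eq_sum_range, Matrix.transpose_sum]
    simp [Matrix.transpose_pow, hSsym]
  refine ⟨Polynomial.aeval S p, ?_, ?_, ?_⟩
  · rw [← hT]; exact hTU.1
  · rw [← hT]; exact hTU.2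
  · rw [hsym, ← hT, ← cfc_mul p.eval p.eval S]
    rw [cfc_congr (g := id) (fun z hz => hp z hz), cfc_id ℂ S]

/-- If `iH` is skew-Hermitian and there is a symmetric unitary `S` with `S H + Hᵀ S = 0`,
then `H` is unitarily conjugate to a skew-symmetric matrix. -/
theorem conjugate_to_orthogonal (N : ℕ) (H : Matrix (Fin N) (Fin N) ℂ)
    (hH : (Complex.I • H)ᴴ = -(Complex.I • H))
    (S : Matrix (Fin N) (Fin N) ℂ)
    (hSsym : Sᵀ = S) (hSu : Sᴴ * S = 1) (hSu' : S * Sᴴ = 1)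
    (hS : S * H + Hᵀ * S = 0) :
    ∃ T : Matrix (Fin N) (Fin N) ℂ,
      Tᴴ * T = 1 ∧ T * Tᴴ = 1 ∧ (T * H * Tᴴ)ᵀ = -(T * H * Tᴴ) := by
  obtain ⟨T, h1, h2, h3⟩ := hua_aux N S hSsym hSu hSu'
  refine ⟨T, h1, h2, ?_⟩
  have h4 : Tᴴᵀ * Tᵀ = 1 := by rw [← transpose_mul, h2, transpose_one]
  have h5 : Hᵀ * S = -(S * H) := by rw [eq_neg_iff_add_eq_zero, add_comm, hS]
  calc (T * H * Tᴴ)ᵀ = Tᴴᵀ * (Hᵀ * (Tᵀ * (T * Tᴴ))) := by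
        rw [h2, mul_one, transpose_mul, transpose_mul]
    _ = Tᴴᵀ * (Hᵀ * S) * Tᴴ := by rw [← h3]; simp only [mul_assoc]
    _ = -((Tᴴᵀ * Tᵀ) * T * H * Tᴴ) := by
        rw [h5, ← h3]; simp only [mul_assoc, mul_neg, neg_mul]
    _ = _ := by rw [h4, one_mul]
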